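/- For every integer n ≥ 0, the identity −T_{n+1}(z) + 2·(∑_{i=1}^{n} (−1)^{n−i}·T_i(z) + (−1)^n) = (2−z)·S_n(z) holds in ℂ[z]. -/

import Mathlib

open Polynomial

/-- The Chebyshev-like polynomials `S n ∈ R[X]` defined by `S 0 = 1`, `S 1 = X` and
`S (n+1) = X * S n - S (n-1)` for all `n : ℤ`. -/
noncomputable def S (R : Type*) [CommRing R] : ℤ → R[X]
  | 0 => 1
  | 1 => X
  | (n : ℕ) + 2 => X * S R (n + 1) - S R n
  | -((n : ℕ) + 1) => X * S R (-n) - S R (-n + 1)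
  termination_by n => Int.natAbs n + Int.natAbs (n - 1)

/-- The Chebyshev-like polynomials of the first kind `T n ∈ R[X]` defined by `T 0 = 2`,
`T 1 = X` and `T (n+1) = X * T n - T (n-1)` for all `n : ℤ`. -/
noncomputable def Tc (R : Type*) [CommRing R] : ℤ → R[X]
  | 0 => 2
  | 1 => X
  | (n : ℕ) + 2 => X * Tc R (n + 1) - Tc R n
  | -((n : ℕ) + 1) => X * Tc R (-n) - Tc R (-n + 1)
  termination_by n => Int.natAbs n + Int.natAbs (n - 1)

/-!
Put `D n = S n - S (n - 1)`. Since `T n = S n - S (n - 2) = D n + D (n - 1)`, the alternating sum of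
the `T i` telescopes to `D n - (-1) ^ n`, so the left-hand side equals
`-(S (n + 1) - S (n - 1)) + 2 * (S n - S (n - 1))`, and the recurrence for `S` finishes the proof.
-/

theorem sum_Icc_neg_one_pow_succ_sub_mul {A : Type*} [Ring A] (f : ℕ → A) (n : ℕ) :
    ∑ i ∈ Finset.Icc 1 (n + 1), (-1) ^ (n + 1 - i) * f i =
      f (n + 1) - ∑ i ∈ Finset.Icc 1 n, (-1) ^ (n - i) * f i := by
  have sign_flip : ∀ i ∈ Finset.Icc 1 n,
      (-1 : A) ^ (n + 1 - i) * f i = -((-1) ^ (n - i) * f i) := fun i hi ↦ by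
    rw [Nat.succ_sub (Finset.mem_Icc.1 hi).2, pow_succ', neg_one_mul, neg_mul]
  rw [Finset.sum_Icc_succ_top n.succ_pos, Finset.sum_congr rfl sign_flip, Finset.sum_neg_distrib,
    Nat.sub_self, pow_zero, one_mul, neg_add_eq_sub]

theorem sum_Icc_neg_one_pow_sub_mul_add {A : Type*} [Ring A] (f : ℤ → A) (n : ℕ) :
    ∑ i ∈ Finset.Icc 1 n, (-1) ^ (n - i) * (f i + f (i - 1)) = f n - (-1) ^ n * f 0 := by
  induction n with
  | zero => simp
  | succ n ih =>
    rw [sum_Icc_neg_one_pow_succ_sub_mul (fun i : ℕ ↦ f i + f (i - 1)), ih, pow_succ',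
      Nat.cast_succ, add_sub_cancel_right]
    noncomm_ring

section Chebyshev

variable (R : Type*) [CommRing R]

theorem S_eq_chebyshev_S (n : ℤ) : S R n = Chebyshev.S R n := by
  fun_induction S R n with
  | case1 => exact (Chebyshev.S_zero R).symm
  | case2 => exact (Chebyshev.S_one R).symm
  | case3 n ih₁ ih₀ =>
    rw [ih₁, ih₀]
    exact (Chebyshev.S_add_two R n).symm
  | case4 n ih₁ ih₀ => rw [ih₁, ih₀, Int.negSucc_eq, neg_add', Chebyshev.S_sub_one]

theorem Tc_eq_chebyshev_C (n : ℤ) : Tc R n = Chebyshev.C R n := by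
  fun_induction Tc R n with
  | case1 => exact (Chebyshev.C_zero R).symm
  | case2 => exact (Chebyshev.C_one R).symm
  | case3 n ih₁ ih₀ =>
    rw [ih₁, ih₀]
    exact (Chebyshev.C_add_two R n).symm
  | case4 n ih₁ ih₀ => rw [ih₁, ih₀, Int.negSucc_eq, neg_add', Chebyshev.C_sub_one]

theorem chebyshev_C_eq_S_sub_S (n : ℤ) :
    Chebyshev.C R n = Chebyshev.S R n - Chebyshev.S R (n - 2) := by
  linear_combination Chebyshev.C_eq_S_sub_X_mul_S R n + Chebyshev.S_eq R n

theorem sum_Icc_neg_one_pow_sub_mul_chebyshev_C (n : ℕ) :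
    ∑ i ∈ Finset.Icc 1 n, (-1) ^ (n - i) * Chebyshev.C R i =
      Chebyshev.S R n - Chebyshev.S R (n - 1) - (-1) ^ n := by
  let D (k : ℤ) : R[X] := Chebyshev.S R k - Chebyshev.S R (k - 1)
  have D_zero : D 0 = 1 := by
    simp only [D, zero_sub, Chebyshev.S_zero, Chebyshev.S_neg_one, sub_zero]
  have C_eq (k : ℤ) : Chebyshev.C R k = D k + D (k - 1) := by
    rw [chebyshev_C_eq_S_sub_S, sub_add_sub_cancel, sub_sub, one_add_one_eq_two]
  simp only [C_eq]
  rw [sum_Icc_neg_one_pow_sub_mul_add, D_zero, mul_one]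

theorem alternating_sum_T_general (n : ℕ) :
    -Tc R ((n : ℤ) + 1) +
        2 * ((∑ i ∈ Finset.Icc 1 n, (-1 : R[X]) ^ (n - i) * Tc R (i : ℤ)) + (-1 : R[X]) ^ n) =
      (2 - X) * S R (n : ℤ) := by
  simp only [Tc_eq_chebyshev_C, S_eq_chebyshev_S, sum_Icc_neg_one_pow_sub_mul_chebyshev_C,
    sub_add_cancel]
  have C_succ : Chebyshev.C R (n + 1) = Chebyshev.S R (n + 1) - Chebyshev.S R (n - 1) := by
    rw [chebyshev_C_eq_S_sub_S, show (n : ℤ) + 1 - 2 = n - 1 by ring]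
  linear_combination -C_succ - Chebyshev.S_add_one R n

end Chebyshev

/-- `-T_{n+1}(z) + 2 (∑_{i=1}^{n} (-1)^{n-i} T_i(z) + (-1)^n) = (2-z) S_n(z)` for `n ≥ 0`. -/
theorem alternating_sum_T (n : ℕ) :
    -Tc ℂ ((n : ℤ) + 1) +
        2 * ((∑ i ∈ Finset.Icc 1 n, (-1 : ℂ[X]) ^ (n - i) * Tc ℂ (i : ℤ)) + (-1 : ℂ[X]) ^ n) =
      (2 - X) * S ℂ (n : ℤ) :=
  alternating_sum_T_general ℂ n
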